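/- Let 0 ≤ α < β ≤ 1, μ ≥ 1, g = (g', g_n) ∈ ℤ^{n−1} × ℤ, and X_g = (g'/μ, g_n/μ²). Let F ∈ C^∞(ℝⁿ) with supp F ⊂ Q_{3/(2μ)}(X_g), and let a : Q_{3/(2μ)}(X_g) → ℂ satisfy |a(x,t)| ≤ E_a and |a(x',t') − a(x'',t'')| ≤ K_a|x' − x''| + K̃_a|t' − t''|^β for all (x,t), (x',t'), (x'',t'') ∈ Q_{3/(2μ)}(X_g), where E_a, K_a, K̃_a are positive constants. Then there exists a constant C, depending only on n and α, such that [aF]²_{1/2,0,Q_{2/μ}(X_g)} ≤ C ( E_a² [F]²_{1/2,0,Q_{2/μ}(X_g)} + K_a² μ⁻¹ ∫_{Q_{2/μ}(X_g)} |F(x,t)|² dX ) and [aF]²_{0,α,Q_{2/μ}(X_g)} ≤ C ( E_a² [F]²_{0,α,Q_{2/μ}(X_g)} + (K̃_a² μ^{−4(β−α)}/(β−α)) ∫_{Q_{2/μ}(X_g)} |F(x,t)|² dX ). -/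

import Mathlib

/-!
The product `aF` is controlled pointwise by splitting
`a₁F₁ - a₂F₂ = (a₁ - a₂)F₁ + a₂(F₁ - F₂)` when both values of `F` are nonzero; when one of them
vanishes, `|F₁ - F₂|` is the other one. So `a` is only ever evaluated on the inner box, and
`‖a₁F₁ - a₂F₂‖² ≤ 2E²‖F₁ - F₂‖² + 2D²‖F₁‖²`, with `D` the modulus of continuity of `a`
(`norm_mul_sub_mul_sq_le`).

After division by the weight, the second term carries a weakly singular kernel in one group of
variables: `‖x₁ - x₂‖^{-d}` in dimension `d + 1`, or `|t₁ - t₂|^{2(β-α)-1}` in dimension one.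
Polar coordinates (`radial_kernel_bound`) bound its integral over a set of diameter at most `R` by
a multiple of `R`, respectively `R^{2(β-α)}/(β-α)`; here `R` is comparable to `1/μ`,
respectively `1/μ²`, which gives the two powers of `μ`.

The seminorms are iterated Bochner integrals, so the majorant has to be integrable at each level
(`iterated_integral_bound`). This holds because `F` is bounded, measurable and Lipschitz, so that
its difference quotients are dominated by the same kernels. Nothing is needed about the
measurability of `a`.
-/

noncomputable section
open MeasureTheory Set

namespace CSemi

abbrev Esp (m : ℕ) := EuclideanSpace ℝ (Fin m)

/-- The squared seminorm `[f]²_{1/2,0}` over `S × I`, where the ambient dimension is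
`n = d+2` and the space variable ranges in `ℝ^{n-1}`. -/
def semiX {d : ℕ} {F : Type*} [NormedAddCommGroup F]
    (S : Set (Esp (d + 1))) (I : Set ℝ) (f : Esp (d + 1) → ℝ → F) : ℝ :=
  ∫ t in I, ∫ x1 in S, ∫ x2 in S, ‖f x1 t - f x2 t‖ ^ 2 / ‖x1 - x2‖ ^ (d + 2)

/-- The squared seminorm `[f]²_{0,α}` over `S × I`. -/
def semiT {d : ℕ} {F : Type*} [NormedAddCommGroup F]
    (α : ℝ) (S : Set (Esp (d + 1))) (I : Set ℝ) (f : Esp (d + 1) → ℝ → F) : ℝ :=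
  ∫ x in S, ∫ t1 in I, ∫ t2 in I, ‖f x t1 - f x t2‖ ^ 2 / |t1 - t2| ^ ((1 : ℝ) + 2 * α)

/-- The closed cube `Q'_r(c)` in the space variables. -/
def boxX {d : ℕ} (c : Esp (d + 1)) (r : ℝ) : Set (Esp (d + 1)) :=
  {x | ∀ j, |x j - c j| ≤ r}

/-- The time interval `I_r(c)`. -/
def intT (c r : ℝ) : Set ℝ := Icc (c - r ^ 2) (c + r ^ 2)

/-- `∫_{Q} |f|² dX` as an iterated integral. -/
def sqInt {d : ℕ} {F : Type*} [NormedAddCommGroup F]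
    (S : Set (Esp (d + 1))) (I : Set ℝ) (f : Esp (d + 1) → ℝ → F) : ℝ :=
  ∫ t in I, ∫ x in S, ‖f x t‖ ^ 2

/-! ### Pointwise product estimate -/

theorem norm_mul_sub_mul_sq_le (a₁ a₂ z₁ z₂ : ℂ) (E D : ℝ)
    (h₁ : z₁ ≠ 0 → ‖a₁‖ ≤ E) (h₂ : z₂ ≠ 0 → ‖a₂‖ ≤ E)
    (h₁₂ : z₁ ≠ 0 → z₂ ≠ 0 → ‖a₁ - a₂‖ ≤ D) :
    ‖a₁ * z₁ - a₂ * z₂‖ ^ 2 ≤ 2 * E ^ 2 * ‖z₁ - z₂‖ ^ 2 + 2 * D ^ 2 * ‖z₁‖ ^ 2 := by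
  by_cases hz₁ : z₁ = 0
  · by_cases hz₂ : z₂ = 0
    · simp [hz₁, hz₂]
    · have h : ‖a₂‖ ^ 2 ≤ E ^ 2 := by gcongr; exact h₂ hz₂
      simp only [hz₁, mul_zero, zero_sub, norm_neg, norm_mul, mul_pow, norm_zero]
      nlinarith [sq_nonneg ‖z₂‖, sq_nonneg ‖a₂‖, mul_le_mul_of_nonneg_right h (sq_nonneg ‖z₂‖),
        mul_nonneg (sq_nonneg E) (sq_nonneg ‖z₂‖)]
  · have h : ‖a₁‖ ^ 2 ≤ E ^ 2 := by gcongr; exact h₁ hz₁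
    by_cases hz₂ : z₂ = 0
    · simp only [hz₂, mul_zero, sub_zero, norm_mul, mul_pow]
      nlinarith [mul_le_mul_of_nonneg_right h (sq_nonneg ‖z₁‖),
        mul_nonneg (sq_nonneg E) (sq_nonneg ‖z₁‖), mul_nonneg (sq_nonneg D) (sq_nonneg ‖z₁‖)]
    · have e : a₁ * z₁ - a₂ * z₂ = (a₁ - a₂) * z₁ + a₂ * (z₁ - z₂) := by ring
      have b : ‖a₁ * z₁ - a₂ * z₂‖ ≤ D * ‖z₁‖ + E * ‖z₁ - z₂‖ := by
        rw [e]
        refine (norm_add_le _ _).trans ?_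
        rw [norm_mul, norm_mul]
        gcongr
        · exact h₁₂ hz₁ hz₂
        · exact h₂ hz₂
      have b2 := pow_le_pow_left₀ (norm_nonneg _) b 2
      nlinarith [sq_nonneg (D * ‖z₁‖ - E * ‖z₁ - z₂‖)]

/-! ### Integration of the majorant -/

/-- A majorant built from a dominated quotient `h` and a weakly singular kernel `k` may be
integrated level by level. The minorant `u` needs no measurability, since the Bochner integral
of a non-integrable function is zero. -/
theorem iterated_integral_bound {X Y : Type*} [MeasurableSpace X] [MeasurableSpace Y]
    (m : Measure X) [IsFiniteMeasure m] (ν : Measure Y) [IsFiniteMeasure ν]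
    (u h : Y → X → X → ℝ) (φ : Y → X → ℝ) (k : X → X → ℝ) (c₁ c₂ L M B : ℝ)
    (hc₂ : 0 ≤ c₂) (hL : 0 ≤ L)
    (hmeas : Measurable fun q : (Y × X) × X => h q.1.1 q.1.2 q.2)
    (φmeas : Measurable fun q : Y × X => φ q.1 q.2)
    (h0 : ∀ y x x', 0 ≤ h y x x') (u0 : ∀ y x x', 0 ≤ u y x x')
    (φ0 : ∀ y x, 0 ≤ φ y x) (φB : ∀ y x, φ y x ≤ B)
    (hk : ∀ y, ∀ᵐ x ∂m, ∀ᵐ x' ∂m, h y x x' ≤ L * k x x')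
    (hki : ∀ᵐ x ∂m, Integrable (k x) m ∧ ∫ x', k x x' ∂m ≤ M)
    (hu : ∀ᵐ y ∂ν, ∀ᵐ x ∂m, ∀ᵐ x' ∂m,
      u y x x' ≤ c₁ * h y x x' + c₂ * (k x x' * φ y x)) :
    ∫ y, ∫ x, ∫ x', u y x x' ∂m ∂m ∂ν
      ≤ c₁ * (∫ y, ∫ x, ∫ x', h y x x' ∂m ∂m ∂ν) + c₂ * M * ∫ y, ∫ x, φ y x ∂m ∂ν := by
  have mA : StronglyMeasurable fun q : Y × X => ∫ x', h q.1 q.2 x' ∂m :=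
    hmeas.stronglyMeasurable.integral_prod_right'
  have mA2 : StronglyMeasurable fun y : Y => ∫ x, ∫ x', h y x x' ∂m ∂m :=
    mA.integral_prod_right'
  have mφ2 : StronglyMeasurable fun y : Y => ∫ x, φ y x ∂m :=
    φmeas.stronglyMeasurable.integral_prod_right'
  have hint : ∀ y, ∀ᵐ x ∂m, Integrable (h y x) m := by
    intro y
    filter_upwards [hk y, hki] with x h1 h2
    refine (h2.1.const_mul L).mono' ?_ ?_
    · exact (hmeas.comp (measurable_prodMk_left (x := (y, x)))).aestronglyMeasurable
    · filter_upwards [h1] with x' h3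
      rwa [Real.norm_of_nonneg (h0 _ _ _)]
  have A0 : ∀ y x, 0 ≤ ∫ x', h y x x' ∂m := fun y x => integral_nonneg (h0 y x)
  have AB : ∀ y, ∀ᵐ x ∂m, ∫ x', h y x x' ∂m ≤ L * M := by
    intro y
    filter_upwards [hk y, hki] with x h1 h2
    calc ∫ x', h y x x' ∂m ≤ ∫ x', L * k x x' ∂m :=
          integral_mono_of_nonneg (Filter.Eventually.of_forall (h0 y x)) (h2.1.const_mul L) h1
      _ = L * ∫ x', k x x' ∂m := integral_const_mul _ _
      _ ≤ L * M := by gcongr; exact h2.2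
  have Aint : ∀ y, Integrable (fun x => ∫ x', h y x x' ∂m) m := by
    intro y
    refine Integrable.of_bound (C := L * M) ?_ ?_
    · exact (mA.comp_measurable measurable_prodMk_left).aestronglyMeasurable
    · filter_upwards [AB y] with x hx
      rwa [Real.norm_of_nonneg (A0 _ _)]
  have φint : ∀ y, Integrable (φ y) m := by
    intro y
    refine Integrable.of_bound (C := B) ?_ ?_
    · exact (φmeas.comp measurable_prodMk_left).aestronglyMeasurable
    · refine Filter.Eventually.of_forall fun x => ?_
      rw [Real.norm_of_nonneg (φ0 _ _)]; exact φB y x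
  have A2int : Integrable (fun y => ∫ x, ∫ x', h y x x' ∂m ∂m) ν := by
    refine Integrable.of_bound (C := L * M * m.real univ) mA2.aestronglyMeasurable ?_
    refine Filter.Eventually.of_forall fun y => ?_
    refine norm_integral_le_of_norm_le_const ?_
    filter_upwards [AB y] with x hx
    rwa [Real.norm_of_nonneg (A0 _ _)]
  have φ2int : Integrable (fun y => ∫ x, φ y x ∂m) ν := by
    refine Integrable.of_bound (C := B * m.real univ) mφ2.aestronglyMeasurable ?_
    refine Filter.Eventually.of_forall fun y => ?_
    refine norm_integral_le_of_norm_le_const ?_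
    refine Filter.Eventually.of_forall fun x => ?_
    rw [Real.norm_of_nonneg (φ0 _ _)]; exact φB y x
  have step : ∀ᵐ y ∂ν, ∫ x, ∫ x', u y x x' ∂m ∂m
      ≤ c₁ * (∫ x, ∫ x', h y x x' ∂m ∂m) + c₂ * M * ∫ x, φ y x ∂m := by
    filter_upwards [hu] with y hy
    calc ∫ x, ∫ x', u y x x' ∂m ∂m
        ≤ ∫ x, (c₁ * (∫ x', h y x x' ∂m) + c₂ * M * φ y x) ∂m := by
          refine integral_mono_of_nonneg ?_
            (((Aint y).const_mul c₁).add ((φint y).const_mul (c₂ * M))) ?_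
          · exact Filter.Eventually.of_forall fun x => integral_nonneg (u0 y x)
          · filter_upwards [hy, hint y, hki] with x h1 h2 h3
            calc ∫ x', u y x x' ∂m
                ≤ ∫ x', (c₁ * h y x x' + c₂ * (k x x' * φ y x)) ∂m :=
                  integral_mono_of_nonneg (Filter.Eventually.of_forall (u0 y x))
                    ((h2.const_mul c₁).add ((h3.1.mul_const _).const_mul c₂)) h1
              _ = c₁ * (∫ x', h y x x' ∂m) + c₂ * ((∫ x', k x x' ∂m) * φ y x) := by
                  rw [integral_add (h2.const_mul c₁) ((h3.1.mul_const _).const_mul c₂),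
                    integral_const_mul, integral_const_mul, integral_mul_const]
              _ ≤ c₁ * (∫ x', h y x x' ∂m) + c₂ * (M * φ y x) := by
                  have := φ0 y x
                  gcongr
                  exact h3.2
              _ = _ := by ring
      _ = _ := by
          rw [integral_add ((Aint y).const_mul c₁) ((φint y).const_mul (c₂ * M)),
            integral_const_mul, integral_const_mul]
  calc ∫ y, ∫ x, ∫ x', u y x x' ∂m ∂m ∂ν
      ≤ ∫ y, (c₁ * (∫ x, ∫ x', h y x x' ∂m ∂m) + c₂ * M * ∫ x, φ y x ∂m) ∂ν := by
        refine integral_mono_of_nonneg ?_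
          ((A2int.const_mul c₁).add (φ2int.const_mul (c₂ * M))) step
        exact Filter.Eventually.of_forall fun y =>
          integral_nonneg fun x => integral_nonneg (u0 y x)
    _ = _ := by
        rw [integral_add (A2int.const_mul c₁) (φ2int.const_mul (c₂ * M)),
          integral_const_mul, integral_const_mul]

/-! ### Weakly singular kernels -/

/-- A radial kernel centred at `x₁`, integrated over a set within distance `R` of `x₁`, is bounded
by its integral over the ball of radius `R`, written in polar coordinates. -/
theorem radial_kernel_bound {E : Type*} [NormedAddCommGroup E] [NormedSpace ℝ E]
    [FiniteDimensional ℝ E] [Nontrivial E] [MeasurableSpace E] [BorelSpace E]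
    (m : Measure E) [m.IsAddHaarMeasure] (f : ℝ → ℝ) (hf0 : ∀ y, 0 ≤ y → 0 ≤ f y) (R : ℝ)
    (S : Set E) (hSm : MeasurableSet S) (x₁ : E) (hS : ∀ x ∈ S, ‖x₁ - x‖ ≤ R)
    (hf : IntegrableOn (fun y => y ^ (Module.finrank ℝ E - 1) * f y) (Ioc 0 R)) :
    IntegrableOn (fun x => f ‖x₁ - x‖) S m ∧
      ∫ x in S, f ‖x₁ - x‖ ∂m ≤ Module.finrank ℝ E * m.real (Metric.ball 0 1) *
        ∫ y in Ioc 0 R, y ^ (Module.finrank ℝ E - 1) * f y := by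
  set g : ℝ → ℝ := (Iic R).indicator f with hg
  have e : (fun y => y ^ (Module.finrank ℝ E - 1) • g y)
      = (Iic R).indicator (fun y => y ^ (Module.finrank ℝ E - 1) * f y) := by
    ext y
    by_cases hy : y ∈ Iic R <;> simp [hg, hy]
  have hgi : Integrable (fun x : E => g ‖x‖) m := by
    rw [integrable_fun_norm_addHaar m, e, integrableOn_indicator_iff measurableSet_Iic]
    rwa [inter_comm, Ioi_inter_Iic]
  have hgt : Integrable (fun x : E => g ‖x₁ - x‖) m := hgi.comp_sub_left x₁
  have heq : EqOn (fun x => f ‖x₁ - x‖) (fun x => g ‖x₁ - x‖) S := by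
    intro x hx
    simp [hg, hS x hx]
  refine ⟨hgt.integrableOn.congr_fun heq.symm hSm, ?_⟩
  rw [setIntegral_congr_fun hSm heq]
  refine (setIntegral_le_integral hgt ?_).trans (le_of_eq ?_)
  · refine Filter.Eventually.of_forall fun x => ?_
    by_cases hx : ‖x₁ - x‖ ≤ R
    · simpa [hg, hx] using hf0 _ (norm_nonneg _)
    · simp [hg, hx]
  · rw [integral_sub_left_eq_self (fun x => g ‖x‖) m x₁, integral_fun_norm_addHaar m, e,
      setIntegral_indicator measurableSet_Iic, Ioi_inter_Iic]
    simp [nsmul_eq_mul, mul_assoc]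

theorem isClosed_boxX {d : ℕ} (c : Esp (d + 1)) (r : ℝ) : IsClosed (boxX c r) := by
  unfold boxX
  rw [Set.ofPred_forall]
  exact isClosed_iInter fun j => isClosed_le (by fun_prop) continuous_const

theorem norm_le_of_coord {d : ℕ} (x : Esp (d + 1)) (r : ℝ) (hr : 0 ≤ r)
    (h : ∀ j, |x j| ≤ r) : ‖x‖ ≤ (d + 1) * r := by
  refine abs_le_of_sq_le_sq' ?_ (by positivity) |>.2
  rw [EuclideanSpace.norm_sq_eq]
  calc ∑ i, ‖x i‖ ^ 2 ≤ ∑ i : Fin (d + 1), r ^ 2 :=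
        Finset.sum_le_sum fun i _ => pow_le_pow_left₀ (norm_nonneg _) (h i) 2
    _ = (d + 1) * r ^ 2 := by simp
    _ ≤ ((d + 1) * r) ^ 2 := by
        have : (0 : ℝ) ≤ d := Nat.cast_nonneg d
        nlinarith [mul_nonneg this (sq_nonneg r), mul_nonneg (mul_nonneg this this) (sq_nonneg r)]

theorem isCompact_boxX {d : ℕ} (c : Esp (d + 1)) (r : ℝ) (hr : 0 ≤ r) :
    IsCompact (boxX c r) := by
  refine (isCompact_closedBall c ((d + 1) * r)).of_isClosed_subset (isClosed_boxX c r) ?_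
  intro x hx
  rw [mem_closedBall_iff_norm]
  exact norm_le_of_coord _ r hr (fun j => by simpa using hx j)

theorem spatial_kernel_bound {d : ℕ} (c x₁ : Esp (d + 1)) (r : ℝ) (hr : 0 ≤ r)
    (hx₁ : x₁ ∈ boxX c r) :
    IntegrableOn (fun x => ‖x₁ - x‖ ^ 2 / ‖x₁ - x‖ ^ (d + 2)) (boxX c r) ∧
      ∫ x in boxX c r, ‖x₁ - x‖ ^ 2 / ‖x₁ - x‖ ^ (d + 2)
        ≤ (d + 1) * volume.real (Metric.ball (0 : Esp (d + 1)) 1) * ((d + 1) * (2 * r)) := by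
  have hdist : ∀ x ∈ boxX c r, ‖x₁ - x‖ ≤ (d + 1) * (2 * r) := by
    intro x hx
    refine norm_le_of_coord _ _ (by positivity) fun j => ?_
    have h1 := abs_le.1 (hx j)
    have h2 := abs_le.1 (hx₁ j)
    rw [PiLp.sub_apply, abs_le]
    constructor <;> linarith [h1.1, h1.2, h2.1, h2.2]
  -- In polar coordinates the Jacobian `y ^ d` cancels the singularity exactly.
  have e : EqOn (fun y : ℝ => y ^ (Module.finrank ℝ (Esp (d + 1)) - 1) * (y ^ 2 / y ^ (d + 2)))
      (fun _ => 1) (Ioc 0 ((d + 1) * (2 * r))) := by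
    intro y hy
    have : y ≠ 0 := hy.1.ne'
    simp only [finrank_euclideanSpace, Fintype.card_fin, Nat.add_sub_cancel]
    field_simp
    ring
  have R0 : (0 : ℝ) ≤ (d + 1) * (2 * r) := by positivity
  have key := radial_kernel_bound (volume : Measure (Esp (d + 1)))
    (fun y => y ^ 2 / y ^ (d + 2)) (fun y hy => by positivity) ((d + 1) * (2 * r)) (boxX c r)
    (isClosed_boxX c r).measurableSet x₁ hdist
    ((integrableOn_const (by simp)).congr_fun e.symm measurableSet_Ioc)
  refine ⟨key.1, key.2.trans (le_of_eq ?_)⟩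
  rw [setIntegral_congr_fun measurableSet_Ioc e]
  simp [R0]

theorem time_kernel_bound (p l t₁ : ℝ) (c : ℝ) (hp : 0 < p) (hl : 0 ≤ l)
    (ht₁ : t₁ ∈ Icc (c - l) (c + l)) :
    IntegrableOn (fun t => |t₁ - t| ^ (p - 1)) (Icc (c - l) (c + l)) ∧
      ∫ t in Icc (c - l) (c + l), |t₁ - t| ^ (p - 1) ≤ 2 * ((2 * l) ^ p / p) := by
  have hdist : ∀ t ∈ Icc (c - l) (c + l), ‖t₁ - t‖ ≤ 2 * l := by
    intro t ht
    rw [Real.norm_eq_abs, abs_le]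
    constructor <;> linarith [ht.1, ht.2, ht₁.1, ht₁.2]
  have e : (fun y : ℝ => y ^ (Module.finrank ℝ ℝ - 1) * y ^ (p - 1)) = fun y => y ^ (p - 1) := by
    ext y; simp
  have hi : IntervalIntegrable (fun y : ℝ => y ^ (p - 1)) volume 0 (2 * l) :=
    intervalIntegral.intervalIntegrable_rpow' (by linarith)
  have l0 : 0 ≤ 2 * l := by positivity
  have key := radial_kernel_bound (volume : Measure ℝ) (fun y => y ^ (p - 1))
    (fun y hy => by positivity) (2 * l) (Icc (c - l) (c + l)) measurableSet_Icc t₁ hdist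
    (by rw [e]; exact (intervalIntegrable_iff_integrableOn_Ioc_of_le l0).1 hi)
  refine ⟨by simpa using key.1, ?_⟩
  have k2 := key.2
  rw [e, ← intervalIntegral.integral_of_le l0, integral_rpow (Or.inl (by linarith))] at k2
  simpa [Real.zero_rpow hp.ne', Real.volume_real_ball] using k2

/-! ### Hölder exponents in the time variable -/

/-- After division by the weight, the squared Hölder modulus becomes the kernel
`|s| ^ (2 (β - α) - 1)`. -/
theorem rpow_sq_div {s α β : ℝ} (hs : 0 < s) :
    (s ^ β) ^ 2 / s ^ ((1 : ℝ) + 2 * α) = s ^ (2 * (β - α) - 1) := by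
  rw [← Real.rpow_natCast, ← Real.rpow_mul hs.le, ← Real.rpow_sub hs]
  congr 1
  push_cast
  ring

/-- The difference quotients of a Lipschitz function are dominated by the Hölder kernel on an
interval of length at most `8`. -/
theorem sq_div_rpow_le {s α β : ℝ} (hs : 0 < s) (hs8 : s ≤ 8) (hβ0 : 0 ≤ β) (hβ : β ≤ 1) :
    s ^ 2 / s ^ ((1 : ℝ) + 2 * α) ≤ 64 * s ^ (2 * (β - α) - 1) := by
  rw [← rpow_sq_div hs, ← mul_div_assoc]
  gcongr
  have h1 : s = s ^ β * s ^ (1 - β) := by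
    rw [← Real.rpow_add hs]; simp
  have h2 : s ^ (1 - β) ≤ 8 :=
    calc s ^ (1 - β) ≤ (8 : ℝ) ^ (1 - β) := Real.rpow_le_rpow hs.le hs8 (by linarith)
      _ ≤ (8 : ℝ) ^ (1 : ℝ) := Real.rpow_le_rpow_of_exponent_le (by norm_num) (by linarith)
      _ = 8 := by simp
  have h3 : 0 ≤ s ^ β := by positivity
  have h4 : 0 ≤ s ^ (1 - β) := by positivity
  calc s ^ 2 = (s ^ β * s ^ (1 - β)) ^ 2 := by rw [← h1]
    _ ≤ (s ^ β * 8) ^ 2 := by gcongr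
    _ = 64 * (s ^ β) ^ 2 := by ring

theorem time_constant_le {μ γ : ℝ} (hμ : 1 ≤ μ) (hγ0 : 0 < γ) (hγ1 : γ ≤ 1) :
    2 * ((2 * (2 / μ) ^ 2) ^ (2 * γ) / (2 * γ)) ≤ 64 * (μ ^ (-(4 : ℝ) * γ) / γ) := by
  have hμ0 : 0 < μ := by linarith
  have e : 2 * (2 / μ) ^ 2 = 8 * μ ^ (-2 : ℝ) := by
    rw [Real.rpow_neg hμ0.le, Real.rpow_two]
    field_simp
    norm_num
  have e2 : (8 * μ ^ (-2 : ℝ)) ^ (2 * γ) = 8 ^ (2 * γ) * μ ^ (-(4 : ℝ) * γ) := by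
    rw [Real.mul_rpow (by norm_num) (by positivity), ← Real.rpow_mul hμ0.le]
    congr 2
    ring
  have h8 : (8 : ℝ) ^ (2 * γ) ≤ 64 :=
    calc (8 : ℝ) ^ (2 * γ) ≤ (8 : ℝ) ^ (2 : ℝ) :=
          Real.rpow_le_rpow_of_exponent_le (by norm_num) (by linarith)
      _ = 64 := by norm_num
  rw [e, e2]
  have hm : 0 ≤ μ ^ (-(4 : ℝ) * γ) := by positivity
  calc 2 * (8 ^ (2 * γ) * μ ^ (-(4 : ℝ) * γ) / (2 * γ))
      = 8 ^ (2 * γ) * (μ ^ (-(4 : ℝ) * γ) / γ) := by field_simp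
    _ ≤ _ := by gcongr

/-! ### The two seminorm estimates -/

theorem isFiniteMeasure_restrict_boxX {d : ℕ} (c : Esp (d + 1)) (r : ℝ) (hr : 0 ≤ r) :
    IsFiniteMeasure (volume.restrict (boxX c r)) :=
  isFiniteMeasure_restrict.2 (isCompact_boxX c r hr).measure_lt_top.ne

theorem isFiniteMeasure_restrict_intT (c r : ℝ) :
    IsFiniteMeasure (volume.restrict (intT c r)) :=
  isFiniteMeasure_restrict.2 (by simp [intT])

/-- The bounds on `a` are only required where `F` does not vanish, so the inner box plays no role
here. -/
theorem semiX_mul_le {d : ℕ} (F a : Esp (d + 1) → ℝ → ℂ) (c : Esp (d + 1)) (tc r Ea Ka B : ℝ)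
    (Kl : NNReal) (hr : 0 ≤ r)
    (hF : Continuous fun p : Esp (d + 1) × ℝ => F p.1 p.2)
    (hL : LipschitzWith Kl fun p : Esp (d + 1) × ℝ => F p.1 p.2)
    (hB : ∀ x t, ‖F x t‖ ≤ B)
    (ha : ∀ x t, F x t ≠ 0 → ‖a x t‖ ≤ Ea)
    (hK : ∀ x x' t, F x t ≠ 0 → F x' t ≠ 0 → ‖a x t - a x' t‖ ≤ Ka * ‖x - x'‖) :
    semiX (boxX c r) (intT tc r) (fun x t => a x t * F x t)
      ≤ 2 * Ea ^ 2 * semiX (boxX c r) (intT tc r) F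
        + 2 * Ka ^ 2 * ((d + 1) * volume.real (Metric.ball (0 : Esp (d + 1)) 1)
          * ((d + 1) * (2 * r))) * sqInt (boxX c r) (intT tc r) F := by
  have := isFiniteMeasure_restrict_boxX c r hr
  have := isFiniteMeasure_restrict_intT tc r
  unfold semiX sqInt
  refine iterated_integral_bound (volume.restrict (boxX c r)) (volume.restrict (intT tc r))
    (fun t x x' => ‖a x t * F x t - a x' t * F x' t‖ ^ 2 / ‖x - x'‖ ^ (d + 2))
    (fun t x x' => ‖F x t - F x' t‖ ^ 2 / ‖x - x'‖ ^ (d + 2))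
    (fun t x => ‖F x t‖ ^ 2) (fun x x' => ‖x - x'‖ ^ 2 / ‖x - x'‖ ^ (d + 2))
    (2 * Ea ^ 2) (2 * Ka ^ 2) (Kl ^ 2) _ (B ^ 2) (by positivity) (by positivity)
    ?_ ?_ (fun _ _ _ => by positivity) (fun _ _ _ => by positivity) (fun _ _ => by positivity)
    (fun t x => pow_le_pow_left₀ (norm_nonneg _) (hB x t) 2) ?_ ?_ ?_
  · have h1 : Continuous fun q : (ℝ × Esp (d + 1)) × Esp (d + 1) => F q.1.2 q.1.1 :=
      hF.comp (f := fun q : (ℝ × Esp (d + 1)) × Esp (d + 1) => (q.1.2, q.1.1)) (by fun_prop)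
    have h2 : Continuous fun q : (ℝ × Esp (d + 1)) × Esp (d + 1) => F q.2 q.1.1 :=
      hF.comp (f := fun q : (ℝ × Esp (d + 1)) × Esp (d + 1) => (q.2, q.1.1)) (by fun_prop)
    exact ((h1.sub h2).norm.pow 2).measurable.div
      (by fun_prop : Continuous fun q : (ℝ × Esp (d + 1)) × Esp (d + 1) =>
        ‖q.1.2 - q.2‖ ^ (d + 2)).measurable
  · have h1 : Continuous fun q : ℝ × Esp (d + 1) => F q.2 q.1 := hF.comp continuous_swap
    exact (h1.norm.pow 2).measurable
  · refine fun t => ae_of_all _ fun x => ae_of_all _ fun x' => ?_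
    have h := hL.norm_sub_le (x, t) (x', t)
    simp only [Prod.mk_sub_mk, sub_self, Prod.norm_mk, norm_zero, norm_nonneg, sup_of_le_left] at h
    rw [← mul_div_assoc, ← mul_pow]
    gcongr
  · filter_upwards [ae_restrict_mem (isClosed_boxX c r).measurableSet] with x hx
    exact spatial_kernel_bound c x r hr hx
  · refine ae_of_all _ fun t => ae_of_all _ fun x => ae_of_all _ fun x' => ?_
    have h := norm_mul_sub_mul_sq_le (a x t) (a x' t) (F x t) (F x' t) Ea (Ka * ‖x - x'‖)
      (ha x t) (ha x' t) (hK x x' t)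
    calc _ ≤ (2 * Ea ^ 2 * ‖F x t - F x' t‖ ^ 2
          + 2 * (Ka * ‖x - x'‖) ^ 2 * ‖F x t‖ ^ 2) / ‖x - x'‖ ^ (d + 2) := by
          gcongr
      _ = _ := by ring

/-- Analogue of `semiX_mul_le` in time. The `L²` term in `sqInt` is integrated in the opposite
order from the seminorm, hence the use of Fubini. -/
theorem semiT_mul_le {d : ℕ} (F a : Esp (d + 1) → ℝ → ℂ) (c : Esp (d + 1))
    (tc r α β Ea Kta B : ℝ) (hαβ : α < β) (hβ0 : 0 ≤ β) (hβ : β ≤ 1)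
    (Kl : NNReal) (hr : 0 ≤ r) (hr2 : r ≤ 2)
    (hF : Continuous fun p : Esp (d + 1) × ℝ => F p.1 p.2)
    (hL : LipschitzWith Kl fun p : Esp (d + 1) × ℝ => F p.1 p.2)
    (hB : ∀ x t, ‖F x t‖ ≤ B)
    (ha : ∀ x t, F x t ≠ 0 → ‖a x t‖ ≤ Ea)
    (hK : ∀ x t t', F x t ≠ 0 → F x t' ≠ 0 → ‖a x t - a x t'‖ ≤ Kta * |t - t'| ^ β) :
    semiT α (boxX c r) (intT tc r) (fun x t => a x t * F x t)
      ≤ 2 * Ea ^ 2 * semiT α (boxX c r) (intT tc r) F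
        + 2 * Kta ^ 2 * (2 * ((2 * r ^ 2) ^ (2 * (β - α)) / (2 * (β - α))))
          * sqInt (boxX c r) (intT tc r) F := by
  have := isFiniteMeasure_restrict_boxX c r hr
  have := isFiniteMeasure_restrict_intT tc r
  have φm : Continuous fun q : Esp (d + 1) × ℝ => ‖F q.1 q.2‖ ^ 2 := hF.norm.pow 2
  have swap : sqInt (boxX c r) (intT tc r) F
      = ∫ x in boxX c r, ∫ t in intT tc r, ‖F x t‖ ^ 2 := by
    refine (integral_integral_swap ?_).symm
    refine Integrable.of_bound (C := B ^ 2) φm.aestronglyMeasurable (ae_of_all _ fun q => ?_)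
    simp only [Function.uncurry, norm_pow, norm_norm]
    exact pow_le_pow_left₀ (norm_nonneg _) (hB _ _) 2
  rw [swap]
  unfold semiT
  refine iterated_integral_bound (volume.restrict (intT tc r)) (volume.restrict (boxX c r))
    (fun x t t' => ‖a x t * F x t - a x t' * F x t'‖ ^ 2 / |t - t'| ^ ((1 : ℝ) + 2 * α))
    (fun x t t' => ‖F x t - F x t'‖ ^ 2 / |t - t'| ^ ((1 : ℝ) + 2 * α))
    (fun x t => ‖F x t‖ ^ 2) (fun t t' => |t - t'| ^ (2 * (β - α) - 1))
    (2 * Ea ^ 2) (2 * Kta ^ 2) (Kl ^ 2 * 64) _ (B ^ 2) (by positivity) (by positivity)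
    ?_ φm.measurable (fun _ _ _ => by positivity) (fun _ _ _ => by positivity)
    (fun _ _ => by positivity)
    (fun x t => pow_le_pow_left₀ (norm_nonneg _) (hB x t) 2) ?_ ?_ ?_
  · have h1 : Continuous fun q : (Esp (d + 1) × ℝ) × ℝ => F q.1.1 q.1.2 :=
      hF.comp (f := fun q : (Esp (d + 1) × ℝ) × ℝ => (q.1.1, q.1.2)) (by fun_prop)
    have h2 : Continuous fun q : (Esp (d + 1) × ℝ) × ℝ => F q.1.1 q.2 :=
      hF.comp (f := fun q : (Esp (d + 1) × ℝ) × ℝ => (q.1.1, q.2)) (by fun_prop)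
    have h3 : Continuous fun q : (Esp (d + 1) × ℝ) × ℝ => |q.1.2 - q.2| := by fun_prop
    exact ((h1.sub h2).norm.pow 2).measurable.div (h3.measurable.pow_const _)
  · intro x
    filter_upwards [ae_restrict_mem measurableSet_Icc] with t ht
    filter_upwards [ae_restrict_mem measurableSet_Icc] with t' ht'
    -- On the diagonal the quotient is `0 / 0 = 0`, whatever value the kernel takes there.
    rcases eq_or_ne t t' with rfl | hne
    · simp only [sub_self, norm_zero, ne_eq, OfNat.ofNat_ne_zero, not_false_eq_true, zero_pow,
        zero_div]
      positivity
    · have hs : 0 < |t - t'| := abs_pos.2 (sub_ne_zero.2 hne)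
      have hs8 : |t - t'| ≤ 8 := by
        have : r ^ 2 ≤ 4 := by nlinarith
        rw [abs_le]
        constructor <;> linarith [ht.1, ht.2, ht'.1, ht'.2]
      have h := hL.norm_sub_le (x, t) (x, t')
      simp only [Prod.mk_sub_mk, sub_self, Prod.norm_mk, norm_zero, Real.norm_eq_abs,
        max_eq_right hs.le] at h
      calc _ ≤ (Kl * |t - t'|) ^ 2 / |t - t'| ^ ((1 : ℝ) + 2 * α) := by gcongr
        _ = Kl ^ 2 * (|t - t'| ^ 2 / |t - t'| ^ ((1 : ℝ) + 2 * α)) := by ring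
        _ ≤ Kl ^ 2 * (64 * |t - t'| ^ (2 * (β - α) - 1)) := by
          gcongr
          exact sq_div_rpow_le hs hs8 hβ0 hβ
        _ = _ := by ring
  · filter_upwards [ae_restrict_mem measurableSet_Icc] with t ht
    exact time_kernel_bound (2 * (β - α)) (r ^ 2) t tc (by linarith) (by positivity) ht
  · refine ae_of_all _ fun x => ae_of_all _ fun t => ae_of_all _ fun t' => ?_
    rcases eq_or_ne t t' with rfl | hne
    · simp only [sub_self, norm_zero, ne_eq, OfNat.ofNat_ne_zero, not_false_eq_true, zero_pow,
        zero_div, mul_zero, zero_add]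
      positivity
    · have hs : 0 < |t - t'| := abs_pos.2 (sub_ne_zero.2 hne)
      have h := norm_mul_sub_mul_sq_le (a x t) (a x t') (F x t) (F x t') Ea
        (Kta * |t - t'| ^ β) (ha x t) (ha x t') (hK x t t')
      calc _ ≤ (2 * Ea ^ 2 * ‖F x t - F x t'‖ ^ 2
            + 2 * (Kta * |t - t'| ^ β) ^ 2 * ‖F x t‖ ^ 2) / |t - t'| ^ ((1 : ℝ) + 2 * α) := by
            gcongr
        _ = _ := by
            rw [← rpow_sq_div hs]
            ring

theorem sqInt_nonneg {d : ℕ} (S : Set (Esp (d + 1))) (I : Set ℝ) (F : Esp (d + 1) → ℝ → ℂ) :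
    0 ≤ sqInt S I F :=
  integral_nonneg fun _ => integral_nonneg fun _ => by positivity

theorem semiX_nonneg {d : ℕ} (S : Set (Esp (d + 1))) (I : Set ℝ) (F : Esp (d + 1) → ℝ → ℂ) :
    0 ≤ semiX S I F :=
  integral_nonneg fun _ => integral_nonneg fun _ => integral_nonneg fun _ => by positivity

theorem semiT_nonneg {d : ℕ} (α : ℝ) (S : Set (Esp (d + 1))) (I : Set ℝ)
    (F : Esp (d + 1) → ℝ → ℂ) : 0 ≤ semiT α S I F :=
  integral_nonneg fun _ => integral_nonneg fun _ => integral_nonneg fun _ => by positivity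

/-- Proposition 6.4: product estimates for the seminorms. -/
theorem statement_18 (d : ℕ) (α : ℝ) (hα0 : 0 ≤ α) (hα1 : α < 1) :
    ∃ C : ℝ, 0 < C ∧
      ∀ β : ℝ, α < β → β ≤ 1 →
      ∀ μ : ℝ, 1 ≤ μ →
      ∀ (g' : Fin (d + 1) → ℤ) (gn : ℤ),
      ∀ F : Esp (d + 1) → ℝ → ℂ,
      ∀ a : Esp (d + 1) → ℝ → ℂ,
      ∀ Ea Ka Kta : ℝ, 0 < Ea → 0 < Ka → 0 < Kta →
      -- notation for the center `X_g` and the two boxes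
      ∀ xg : Esp (d + 1), (∀ j, xg j = (g' j : ℝ) / μ) →
      ∀ tg : ℝ, tg = (gn : ℝ) / μ ^ 2 →
        ContDiff ℝ (⊤ : ℕ∞) (fun p : Esp (d + 1) × ℝ => F p.1 p.2) →
        tsupport (fun p : Esp (d + 1) × ℝ => F p.1 p.2) ⊆
          (boxX xg (3 / (2 * μ))) ×ˢ (intT tg (3 / (2 * μ))) →
        (∀ x t, x ∈ boxX xg (3 / (2 * μ)) → t ∈ intT tg (3 / (2 * μ)) →
          ‖a x t‖ ≤ Ea) →
        (∀ x' t' x'' t'', x' ∈ boxX xg (3 / (2 * μ)) → t' ∈ intT tg (3 / (2 * μ)) →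
          x'' ∈ boxX xg (3 / (2 * μ)) → t'' ∈ intT tg (3 / (2 * μ)) →
          ‖a x' t' - a x'' t''‖ ≤ Ka * ‖x' - x''‖ + Kta * |t' - t''| ^ β) →
        semiX (boxX xg (2 / μ)) (intT tg (2 / μ)) (fun x t => a x t * F x t)
            ≤ C * (Ea ^ 2 * semiX (boxX xg (2 / μ)) (intT tg (2 / μ)) F
              + Ka ^ 2 * μ⁻¹ * sqInt (boxX xg (2 / μ)) (intT tg (2 / μ)) F) ∧
          semiT α (boxX xg (2 / μ)) (intT tg (2 / μ)) (fun x t => a x t * F x t)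
            ≤ C * (Ea ^ 2 * semiT α (boxX xg (2 / μ)) (intT tg (2 / μ)) F
              + Kta ^ 2 * μ ^ (-(4 : ℝ) * (β - α)) / (β - α) *
                  sqInt (boxX xg (2 / μ)) (intT tg (2 / μ)) F) := by
  set V : ℝ := volume.real (Metric.ball (0 : Esp (d + 1)) 1) with hV
  have hV0 : 0 ≤ V := measureReal_nonneg
  refine ⟨2 + 2 * ((d + 1) * V * ((d + 1) * 4)) + 128, by positivity, ?_⟩
  intro β hαβ hβ μ hμ g' gn F a Ea Ka Kta hEa hKa hKta xg _ tg _ hFs hsupp haE haK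
  have hμ0 : 0 < μ := by linarith
  have hmem : ∀ x t, F x t ≠ 0 →
      x ∈ boxX xg (3 / (2 * μ)) ∧ t ∈ intT tg (3 / (2 * μ)) := fun x t h =>
    hsupp (subset_tsupport (fun p : Esp (d + 1) × ℝ => F p.1 p.2) (a := (x, t)) h)
  have hcs : HasCompactSupport fun p : Esp (d + 1) × ℝ => F p.1 p.2 :=
    ((isCompact_boxX xg _ (by positivity)).prod isCompact_Icc).of_isClosed_subset
      (isClosed_tsupport _) hsupp
  obtain ⟨Kl, hL⟩ := hFs.lipschitzWith_of_hasCompactSupport hcs (by simp)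
  obtain ⟨B, hB⟩ := hcs.exists_bound_of_continuous hFs.continuous
  have ha : ∀ x t, F x t ≠ 0 → ‖a x t‖ ≤ Ea := fun x t h => haE x t (hmem x t h).1 (hmem x t h).2
  have hr2 : 2 / μ ≤ 2 := div_le_self (by norm_num) hμ
  have hβ0 : 0 < β := by linarith
  have q0 := sqInt_nonneg (boxX xg (2 / μ)) (intT tg (2 / μ)) F
  have x0 := semiX_nonneg (boxX xg (2 / μ)) (intT tg (2 / μ)) F
  have t0 := semiT_nonneg α (boxX xg (2 / μ)) (intT tg (2 / μ)) F
  constructor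
  · refine (semiX_mul_le F a xg tg (2 / μ) Ea Ka B Kl (by positivity) hFs.continuous hL
      (fun x t => hB (x, t)) ha ?_).trans ?_
    · intro x x' t h h'
      have := haK x t x' t (hmem x t h).1 (hmem x t h).2 (hmem x' t h').1 (hmem x' t h').2
      simpa [Real.zero_rpow hβ0.ne'] using this
    · rw [← hV, mul_add]
      have hW : 0 ≤ (d + 1) * V * ((d + 1) * 4) := by positivity
      refine add_le_add ?_ ?_
      · rw [mul_assoc]
        gcongr
        linarith
      · calc _ = (2 * ((d + 1) * V * ((d + 1) * 4)))
              * (Ka ^ 2 * μ⁻¹ * sqInt (boxX xg (2 / μ)) (intT tg (2 / μ)) F) := by ring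
          _ ≤ _ := by
            gcongr
            linarith
  · refine (semiT_mul_le F a xg tg (2 / μ) α β Ea Kta B hαβ hβ0.le hβ Kl (by positivity) hr2
      hFs.continuous hL (fun x t => hB (x, t)) ha ?_).trans ?_
    · intro x t t' h h'
      have := haK x t x t' (hmem x t h).1 (hmem x t h).2 (hmem x t' h').1 (hmem x t' h').2
      simpa using this
    · rw [mul_add]
      have hW : 0 ≤ (d + 1) * V * ((d + 1) * 4) := by positivity
      have hγ : 0 < β - α := by linarith
      refine add_le_add ?_ ?_
      · rw [mul_assoc]
        gcongr
        linarith
      · calc _ ≤ 2 * Kta ^ 2 * (64 * (μ ^ (-(4 : ℝ) * (β - α)) / (β - α)))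
              * sqInt (boxX xg (2 / μ)) (intT tg (2 / μ)) F := by
              have := time_constant_le hμ hγ (by linarith)
              exact mul_le_mul_of_nonneg_right
                (mul_le_mul_of_nonneg_left this (by positivity)) q0
          _ = 128 * (Kta ^ 2 * μ ^ (-(4 : ℝ) * (β - α)) / (β - α)
              * sqInt (boxX xg (2 / μ)) (intT tg (2 / μ)) F) := by ring
          _ ≤ _ := by
            gcongr
            linarith

end CSemi
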